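/- The full HDG system admits at least one solution (U,B,T,P,R̂) ∈ 𝒱×𝒲×Z×Q×R. If moreover the smallness condition max{M₁,M₂,M₃}·(12ζ⁴(‖f₁‖+‖f₂‖+‖f₃‖) + 2ζ²·Pr·Re·‖f₃‖) < 1 holds, where ζ := max{Ha, Rm, Ha·Pr·Re·γ}, ‖f₁‖ := sup{f₁(v)/‖v‖ : 0 ≠ v ∈ V}, ‖f₂‖ := sup{f₂(w)/‖w‖ : 0 ≠ w ∈ W}, and ‖f₃‖ := sup{f₃(z)/‖z‖ : 0 ≠ z ∈ Z}, then this solution is unique. (Abstract finite-dimensional version of Theorem 4.1.) -/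

import Mathlib

/-!
Testing the momentum and induction equations only against the kernels of `b₁` and `b₂` eliminates
the two pressures. Adding a large multiple of the heat equation, which absorbs the buoyancy
coupling, makes the reduced system the zero set of a continuous coercive map on a
finite-dimensional space, and the pressures are recovered from its zeros because a functional that
vanishes on a kernel `ker b` is of the form `b · q`.

A coercive field without zeros would yield a smooth retraction `K` of a ball onto its sphere, which
is impossible (Milnor, Rogers): the integral over the ball of the Jacobian of `x + t (K x - x)` is a
polynomial in `t`, equal to the volume of the ball for small `t`, hence for all `t`, whereas it
vanishes at `t = 1` because `K` takes values in the sphere.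

For uniqueness, the energy identity bounds the energy of the difference of two solutions by a
multiple of itself, with a factor below `1` for small data; the inf-sup conditions then make the
pressures unique.
-/

open Filter Function MeasureTheory Metric Set Topology
open scoped NNReal Polynomial

theorem inter_frontier_nonempty_of_isPreconnected {X : Type*} [TopologicalSpace X] {s t : Set X}
    (ht : IsPreconnected t) (hs : (t ∩ s).Nonempty) (hsc : (t ∩ sᶜ).Nonempty) :
    (t ∩ frontier s).Nonempty := by
  by_contra hempty
  have hcover : t ⊆ interior s ∪ interior sᶜ := fun x hx ↦ by
    have hx' : x ∉ frontier s := fun h ↦ hempty ⟨x, hx, h⟩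
    rwa [← compl_frontier_eq_union_interior]
  obtain ⟨x, hxt, hxs⟩ := hs
  obtain ⟨y, hyt, hys⟩ := hsc
  obtain ⟨z, -, hz, hz'⟩ := ht _ _ isOpen_interior isOpen_interior hcover
    ⟨x, hxt, (hcover hxt).resolve_right fun h ↦ interior_subset h hxs⟩
    ⟨y, hyt, (hcover hyt).resolve_left fun h ↦ hys (interior_subset h)⟩
  exact interior_subset hz' (interior_subset hz)

theorem lipschitzWith_indicator_of_eqOn_frontier {E F : Type*} [SeminormedAddCommGroup E]
    [NormedSpace ℝ E] [SeminormedAddCommGroup F] {s : Set E} (hs : IsClosed s) {g : E → F}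
    {L : ℝ≥0} (hg : LipschitzOnWith L g s) (h0 : EqOn g 0 (frontier s)) :
    LipschitzWith L (s.indicator g) := by
  have crossing : ∀ x ∈ s, ∀ y ∉ s, dist (g x) 0 ≤ L * dist x y := fun x hx y hy ↦ by
    obtain ⟨z, hz, hzs⟩ := inter_frontier_nonempty_of_isPreconnected
      (convex_segment x y).isPreconnected ⟨x, left_mem_segment ℝ x y, hx⟩
      ⟨y, right_mem_segment ℝ x y, hy⟩
    calc dist (g x) 0 = dist (g x) (g z) := by rw [h0 hzs, Pi.zero_apply]
      _ ≤ L * dist x z := hg.dist_le_mul x hx z (hs.frontier_subset hzs)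
      _ ≤ L * dist x y := by
        gcongr
        linarith [dist_add_dist_of_mem_segment hz, dist_nonneg (x := z) (y := y)]
  refine LipschitzWith.of_dist_le_mul fun x y ↦ ?_
  by_cases hx : x ∈ s <;> by_cases hy : y ∈ s
  · simpa only [indicator_of_mem hx, indicator_of_mem hy] using hg.dist_le_mul x hx y hy
  · simpa only [indicator_of_mem hx, indicator_of_notMem hy] using crossing x hx y hy
  · simpa only [indicator_of_notMem hx, indicator_of_mem hy, dist_comm] using crossing y hy x hx
  · simpa only [indicator_of_notMem hx, indicator_of_notMem hy, dist_self] using by positivity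

theorem bijective_add_of_lipschitzWith_lt_one {E : Type*} [NormedAddCommGroup E]
    [CompleteSpace E] {h : E → E} {k : ℝ≥0} (hk : k < 1) (hh : LipschitzWith k h) :
    Bijective fun x ↦ x + h x := by
  have contracting (y : E) : ContractingWith k fun x ↦ y - h x :=
    ⟨hk, LipschitzWith.of_dist_le_mul fun a b ↦ by
      simpa only [dist_sub_left] using hh.dist_le_mul a b⟩
  have fixed_iff (x y : E) : IsFixedPt (fun x ↦ y - h x) x ↔ x + h x = y := by
    rw [IsFixedPt, sub_eq_iff_eq_add, eq_comm]
  refine ⟨fun x y hxy ↦ ?_, fun y ↦ ?_⟩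
  · exact (contracting _).fixedPoint_unique' ((fixed_iff x _).2 hxy) ((fixed_iff y _).2 rfl)
  · exact ⟨_, (fixed_iff _ y).1 (contracting y).fixedPoint_isFixedPt⟩

theorem image_eq_of_bijective_of_eqOn_compl {α : Type*} {f : α → α} (hf : Bijective f)
    {s : Set α} (hid : EqOn f id sᶜ) : f '' s = s := by
  rw [← compl_inj_iff, ← image_compl_eq hf, hid.image_eq, image_id]

theorem exists_polynomial_eval_eq_det_one_add_smul {K V : Type*} [Field K] [AddCommGroup V]
    [Module K V] [FiniteDimensional K V] (φ : V →ₗ[K] V) :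
    ∃ p : K[X], p.natDegree ≤ Module.finrank K V ∧
      ∀ t : K, p.eval t = LinearMap.det (1 + t • φ) := by
  classical
  let b := Module.finBasis K V
  refine ⟨_, (Polynomial.natDegree_det_X_add_C_le (LinearMap.toMatrix b b φ) 1).trans_eq
    (Fintype.card_fin _), fun t ↦ ?_⟩
  rw [← LinearMap.det_toMatrix b, map_add, map_smul, LinearMap.toMatrix_one,
    ← Polynomial.coe_evalRingHom, RingHom.map_det]
  congr 1
  ext i j
  by_cases hij : i = j <;> simp [hij, add_comm, mul_comm t]

theorem integral_eval_eq_of_infinite {α : Type*} [MeasurableSpace α] {μ : Measure α} {n : ℕ}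
    {p : α → ℝ[X]} (hp : ∀ x, (p x).natDegree ≤ n)
    (hint : ∀ t : ℝ, Integrable (fun x ↦ (p x).eval t) μ) {s : Set ℝ} (hs : s.Infinite) {c : ℝ}
    (hc : ∀ t ∈ s, ∫ x, (p x).eval t ∂μ = c) (t : ℝ) : ∫ x, (p x).eval t ∂μ = c := by
  obtain ⟨nodes, hnodes, hcard⟩ := hs.exists_subset_card_eq (n + 1)
  have hinj : InjOn id (nodes : Set ℝ) := injOn_id _
  let w (i : ℝ) : ℝ := (Lagrange.basis nodes id i).eval t
  have eval_eq (q : ℝ[X]) (hq : q.natDegree ≤ n) : q.eval t = ∑ i ∈ nodes, q.eval i * w i := by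
    have hdeg : q.degree < nodes.card := by
      rw [hcard]
      exact (Polynomial.degree_le_of_natDegree_le hq).trans_lt (by exact_mod_cast n.lt_succ_self)
    conv_lhs => rw [Lagrange.eq_interpolate hinj hdeg]
    simp only [Lagrange.interpolate_apply, Polynomial.eval_finsetSum, Polynomial.eval_mul,
      Polynomial.eval_C, id_eq, w]
  have sum_weights : ∑ i ∈ nodes, w i = 1 := by
    simpa using (eval_eq 1 (by simp)).symm
  calc ∫ x, (p x).eval t ∂μ = ∑ i ∈ nodes, (∫ x, (p x).eval i ∂μ) * w i := by
        simp_rw [eval_eq _ (hp _), ← integral_mul_const]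
        exact integral_finsetSum _ fun i _ ↦ (hint i).mul_const _
    _ = ∑ i ∈ nodes, c * w i := Finset.sum_congr rfl fun i hi ↦ by rw [hc i (hnodes hi)]
    _ = c := by rw [← Finset.mul_sum, sum_weights, mul_one]

theorem eventually_injOn_and_image_interior_eq {E : Type*} [NormedAddCommGroup E]
    [NormedSpace ℝ E] [CompleteSpace E] {s : Set E} (hs : IsClosed s) {g : E → E} {L : ℝ≥0}
    (hg : LipschitzOnWith L g s) (h0 : EqOn g 0 (frontier s)) :
    ∀ᶠ t : ℝ in 𝓝 0, InjOn (fun x ↦ x + t • g x) (interior s) ∧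
      (fun x ↦ x + t • g x) '' interior s = interior s := by
  have small : ∀ᶠ t : ℝ in 𝓝 0, ‖t‖₊ * L < 1 := by
    have : Continuous fun t : ℝ ↦ ‖t‖₊ * L := by fun_prop
    exact this.tendsto 0 |>.eventually_lt_const (by simp)
  filter_upwards [small] with t ht
  let f (x : E) : E := x + t • s.indicator g x
  have f_bij : Bijective f := bijective_add_of_lipschitzWith_lt_one ht
    ((lipschitzWith_smul t).comp (lipschitzWith_indicator_of_eqOn_frontier hs hg h0))
  have f_eq : EqOn f (fun x ↦ x + t • g x) (interior s) := fun x hx ↦ by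
    simp only [f, indicator_of_mem (interior_subset hx)]
  have f_id : EqOn f id (interior s)ᶜ := fun x hx ↦ by
    have : s.indicator g x = 0 := by
      by_cases hxs : x ∈ s
      · rw [indicator_of_mem hxs, h0 (hs.frontier_eq ▸ ⟨hxs, hx⟩), Pi.zero_apply]
      · exact indicator_of_notMem hxs g
    simp only [f, this, smul_zero, add_zero, id_eq]
  rw [← f_eq.injOn_iff, ← f_eq.image_eq]
  exact ⟨f_bij.injective.injOn, image_eq_of_bijective_of_eqOn_compl f_bij f_id⟩

theorem eventually_forall_det_one_add_smul_pos {E X : Type*} [NormedAddCommGroup E]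
    [NormedSpace ℝ E] [TopologicalSpace X] {A : X → E →L[ℝ] E} (hA : Continuous A)
    {s : Set X} (hs : IsCompact s) :
    ∀ᶠ t : ℝ in 𝓝 0, ∀ x ∈ s, 0 < (1 + t • A x).det := by
  refine hs.eventually_forall_of_forall_eventually fun x _ ↦ ?_
  have : Continuous fun z : ℝ × X ↦ (1 + z.1 • A z.2).det :=
    ContinuousLinearMap.continuous_det.comp (by fun_prop)
  exact this.tendsto (0, x) |>.eventually_const_lt (by simp [ContinuousLinearMap.det])

section NoRetraction

variable {E : Type*} [NormedAddCommGroup E] [NormedSpace ℝ E] [FiniteDimensional ℝ E]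
  {s : Set E} {g K : E → E}

theorem det_fderiv_eq_zero_of_mapsTo_frontier (hs : IsClosed s) (hK : ContDiff ℝ 1 K)
    (hmaps : MapsTo K s (frontier s)) {x : E} (hx : x ∈ interior s) : (fderiv ℝ K x).det = 0 := by
  by_contra hdet
  have hderiv := (hK.contDiffAt (x := x)).hasStrictFDerivAt one_ne_zero
  rw [← ContinuousLinearMap.coe_toContinuousLinearEquivOfDetNeZero _ hdet] at hderiv
  have hnhds : frontier s ∈ 𝓝 (K x) := by
    rw [← hderiv.map_nhds_eq_of_equiv]
    exact mem_map.2 (mem_of_superset (mem_interior_iff_mem_nhds.1 hx) hmaps)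
  simpa only [interior_frontier hs, mem_empty_iff_false] using mem_interior_iff_mem_nhds.2 hnhds

section Measure

variable [MeasurableSpace E] [BorelSpace E] (μ : Measure E) [μ.IsAddHaarMeasure]

theorem eventually_setIntegral_det_one_add_smul_fderiv (hs : IsCompact s) (hconv : Convex ℝ s)
    (hg : ContDiff ℝ 1 g) (h0 : EqOn g 0 (frontier s)) :
    ∀ᶠ t : ℝ in 𝓝 0,
      ∫ x in interior s, (1 + t • fderiv ℝ g x).det ∂μ = μ.real (interior s) := by
  obtain ⟨L, hL⟩ := hg.contDiffOn.exists_lipschitzOnWith one_ne_zero hconv hs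
  filter_upwards [eventually_injOn_and_image_interior_eq hs.isClosed hL h0,
    eventually_forall_det_one_add_smul_pos (hg.continuous_fderiv one_ne_zero) hs]
    with t ⟨hinj, himage⟩ hpos
  have hderiv (x : E) : HasFDerivAt (fun x ↦ x + t • g x) (1 + t • fderiv ℝ g x) x :=
    (hasFDerivAt_id x).add ((hg.differentiable one_ne_zero x).hasFDerivAt.const_smul t)
  have change_of_variables := integral_image_eq_integral_abs_det_fderiv_smul μ
    isOpen_interior.measurableSet (fun x _ ↦ (hderiv x).hasFDerivWithinAt) hinj fun _ ↦ (1 : ℝ)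
  calc ∫ x in interior s, (1 + t • fderiv ℝ g x).det ∂μ
      = ∫ x in interior s, |(1 + t • fderiv ℝ g x).det| • (1 : ℝ) ∂μ :=
        setIntegral_congr_fun isOpen_interior.measurableSet fun x hx ↦ by
          simp only [abs_of_pos (hpos x (interior_subset hx)), smul_eq_mul, mul_one]
    _ = μ.real (interior s) := by
        rw [← change_of_variables, himage, setIntegral_const, smul_eq_mul, mul_one]

theorem setIntegral_det_one_add_smul_fderiv (hs : IsCompact s) (hconv : Convex ℝ s)
    (hg : ContDiff ℝ 1 g) (h0 : EqOn g 0 (frontier s)) (t : ℝ) :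
    ∫ x in interior s, (1 + t • fderiv ℝ g x).det ∂μ = μ.real (interior s) := by
  choose p hdeg heval using fun x ↦
    exists_polynomial_eval_eq_det_one_add_smul (fderiv ℝ g x : E →ₗ[ℝ] E)
  have eval_eq (t : ℝ) (x : E) : (p x).eval t = (1 + t • fderiv ℝ g x).det := heval x t
  have hint (t : ℝ) : Integrable (fun x ↦ (p x).eval t) (μ.restrict (interior s)) := by
    simp_rw [eval_eq]
    have : Continuous fun x ↦ (1 + t • fderiv ℝ g x).det :=
      ContinuousLinearMap.continuous_det.comp
        (continuous_const.add ((hg.continuous_fderiv one_ne_zero).const_smul t))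
    exact (this.continuousOn.integrableOn_compact hs).mono_set interior_subset
  have near_zero := eventually_setIntegral_det_one_add_smul_fderiv μ hs hconv hg h0
  simp_rw [← eval_eq] at near_zero ⊢
  exact integral_eval_eq_of_infinite hdeg hint (infinite_of_mem_nhds 0 near_zero)
    (fun _ h ↦ h) t

end Measure

theorem not_mapsTo_frontier_of_eqOn_id (hs : IsCompact s) (hconv : Convex ℝ s)
    (hne : (interior s).Nonempty) (hK : ContDiff ℝ 1 K) (hid : EqOn K id (frontier s)) :
    ¬ MapsTo K s (frontier s) := fun hmaps ↦ by
  borelize E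
  let μ : Measure E := Measure.addHaar
  have fderiv_eq (x : E) : 1 + (1 : ℝ) • fderiv ℝ (fun x ↦ K x - x) x = fderiv ℝ K x := by
    rw [fderiv_fun_sub (hK.differentiable one_ne_zero x) differentiableAt_fun_id, fderiv_fun_id,
      one_smul]
    exact add_sub_cancel _ _
  have key := setIntegral_det_one_add_smul_fderiv μ (g := fun x ↦ K x - x) hs hconv
    (hK.sub contDiff_id) (fun x hx ↦ sub_eq_zero.2 (hid hx)) 1
  simp_rw [fderiv_eq] at key
  rw [setIntegral_congr_fun isOpen_interior.measurableSet fun x ↦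
    det_fderiv_eq_zero_of_mapsTo_frontier hs.isClosed hK hmaps, integral_zero] at key
  exact (ENNReal.toReal_pos (isOpen_interior.measure_pos μ hne).ne'
    (measure_mono interior_subset |>.trans_lt hs.measure_lt_top).ne).ne key

end NoRetraction

section ZerosOfVectorFields

variable {E : Type*} [NormedAddCommGroup E] [InnerProductSpace ℝ E] {F : E → E} {R : ℝ}

theorem exists_contDiff_forall_ne_zero_eqOn_id [FiniteDimensional ℝ E] (hF : Continuous F)
    (hne : ∀ x, F x ≠ 0) (hid : ∀ x, R ≤ ‖x‖ → F x = x) {R' : ℝ} (hR : R < R') :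
    ∃ g : E → E, ContDiff ℝ 1 g ∧ (∀ x, g x ≠ 0) ∧ ∀ x, R' ≤ ‖x‖ → g x = x := by
  have houter : IsClosed {x : E | R' ≤ ‖x‖} := isClosed_le continuous_const continuous_norm
  have hinner : {x : E | R < ‖x‖} ∈ 𝓝ˢ {x : E | R' ≤ ‖x‖} :=
    (isOpen_lt continuous_const continuous_norm).mem_nhdsSet.2 fun _ hx ↦ hR.trans_le hx
  obtain ⟨g, hg, hdist, hgF, -⟩ := hF.exists_contDiff_approx_and_eqOn 1 hF.norm
    (fun x ↦ norm_pos_iff.2 (hne x)) houter hinner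
    (contDiffOn_id.congr fun x hx ↦ hid x (le_of_lt hx))
  refine ⟨g, hg, fun x hx ↦ ?_, fun x hx ↦ (hgF hx).trans (hid x (hR.le.trans hx))⟩
  simpa only [hx, dist_zero_left, lt_self_iff_false] using hdist x

theorem exists_eq_zero_of_eqOn_id_of_le_norm [FiniteDimensional ℝ E] (hF : Continuous F)
    (hid : ∀ x, R ≤ ‖x‖ → F x = x) : ∃ x, F x = 0 := by
  by_contra! hne
  let R' := max R 0 + 1
  have hR' : 0 < R' := by positivity
  obtain ⟨g, hg, hg_ne, hg_id⟩ := exists_contDiff_forall_ne_zero_eqOn_id hF hne hid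
    (show R < R' from (le_max_left R 0).trans_lt (lt_add_one _))
  have hfrontier : frontier (closedBall (0 : E) R') = sphere 0 R' := frontier_closedBall 0 hR'.ne'
  refine not_mapsTo_frontier_of_eqOn_id (K := fun x ↦ (R' / ‖g x‖) • g x)
    (isCompact_closedBall 0 R') (convex_closedBall 0 R') ?_ ?_ ?_ ?_
  · exact ⟨0, ball_subset_interior_closedBall (mem_ball_self hR')⟩
  · exact (contDiff_const.div (hg.norm ℝ hg_ne) fun x ↦ norm_ne_zero_iff.2 (hg_ne x)).smul hg
  · intro x hx
    rw [hfrontier, mem_sphere_zero_iff_norm] at hx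
    simp only [hg_id x hx.ge, hx, div_self hR'.ne', one_smul, id_eq]
  · intro x _
    rw [hfrontier, mem_sphere_zero_iff_norm, norm_smul, norm_div, norm_norm,
      div_mul_cancel₀ _ (norm_ne_zero_iff.2 (hg_ne x)), Real.norm_of_nonneg hR'.le]

theorem exists_continuous_forall_ne_zero_eqOn_id (hF : Continuous F) (hne : ∀ x, F x ≠ 0) {r : ℝ}
    (hpos : ∀ x, r ≤ ‖x‖ → 0 < inner ℝ (F x) x) :
    ∃ H : E → E, Continuous H ∧ (∀ x, H x ≠ 0) ∧ ∀ x, r + 1 ≤ ‖x‖ → H x = x := by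
  let χ (x : E) : ℝ := max 0 (min 1 (‖x‖ - r))
  have χ_nonneg (x : E) : 0 ≤ χ x := le_max_left _ _
  have χ_le_one (x : E) : χ x ≤ 1 := max_le zero_le_one (min_le_left _ _)
  refine ⟨fun x ↦ (1 - χ x) • F x + χ x • x, by fun_prop, fun x hx ↦ ?_, fun x hx ↦ ?_⟩
  · rcases lt_or_ge ‖x‖ r with hlt | hge
    · have : χ x = 0 := max_eq_left ((min_le_right _ _).trans (by linarith))
      exact hne x (by simpa only [this, sub_zero, one_smul, zero_smul, add_zero] using hx)
    · have hFx := hpos x hge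
      have hxx : 0 < inner ℝ x x := real_inner_self_pos.2 fun h ↦ by
        simp only [h, inner_zero_right, lt_self_iff_false] at hFx
      have hHx : 0 < inner ℝ ((1 - χ x) • F x + χ x • x) x := by
        rw [inner_add_left, real_inner_smul_left, real_inner_smul_left]
        exact convex_Ioi (0 : ℝ) hFx hxx (sub_nonneg.2 (χ_le_one x)) (χ_nonneg x)
          (sub_add_cancel _ _)
      simp only [show (1 - χ x) • F x + χ x • x = 0 from hx, inner_zero_left,
        lt_self_iff_false] at hHx
  · have : χ x = 1 := by
      rw [show χ x = max 0 (min 1 (‖x‖ - r)) from rfl, min_eq_left (by linarith),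
        max_eq_right zero_le_one]
    simp only [this, sub_self, zero_smul, one_smul, zero_add]

theorem exists_eq_zero_of_eventually_inner_pos [FiniteDimensional ℝ E] (hF : Continuous F)
    (hpos : ∀ᶠ x in cocompact E, 0 < inner ℝ (F x) x) : ∃ x, F x = 0 := by
  by_contra! hne
  rw [← Metric.cobounded_eq_cocompact, hasBasis_cobounded_norm.eventually_iff] at hpos
  obtain ⟨r, -, hr⟩ := hpos
  obtain ⟨H, hH, hH_ne, hH_id⟩ := exists_continuous_forall_ne_zero_eqOn_id hF hne fun x hx ↦ hr hx
  obtain ⟨x, hx⟩ := exists_eq_zero_of_eqOn_id_of_le_norm hH hH_id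
  exact hH_ne x hx

end ZerosOfVectorFields

theorem exists_eq_zero_of_eventually_apply_self_pos {E : Type*} [NormedAddCommGroup E]
    [NormedSpace ℝ E] [FiniteDimensional ℝ E] {N : E → Module.Dual ℝ E}
    (hN : ∀ y, Continuous fun x ↦ N x y) (hpos : ∀ᶠ x in cocompact E, 0 < N x x) :
    ∃ x, N x = 0 := by
  let e := (toEuclidean : E ≃L[ℝ] _)
  let b := EuclideanSpace.basisFun (Fin (Module.finrank ℝ E)) ℝ
  let F (y : EuclideanSpace ℝ (Fin (Module.finrank ℝ E))) :
      EuclideanSpace ℝ (Fin (Module.finrank ℝ E)) :=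
    ∑ i, N (e.symm y) (e.symm (b i)) • b i
  have inner_F (y z) : inner ℝ (F y) z = N (e.symm y) (e.symm z) := by
    conv_rhs => rw [← b.sum_repr' z]
    simp only [F, sum_inner, real_inner_smul_left, map_sum, map_smul, smul_eq_mul, mul_comm]
  have F_cont : Continuous F := continuous_finsetSum _ fun i _ ↦
    ((hN _).comp e.symm.continuous).smul continuous_const
  have F_pos : ∀ᶠ y in cocompact _, 0 < inner ℝ (F y) y := by
    simp only [inner_F]
    exact e.symm.toHomeomorph.isClosedEmbedding.tendsto_cocompact.eventually hpos
  obtain ⟨y, hy⟩ := exists_eq_zero_of_eventually_inner_pos F_cont F_pos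
  refine ⟨e.symm y, LinearMap.ext fun z ↦ ?_⟩
  rw [← e.symm_apply_apply z, ← inner_F, hy, inner_zero_left, LinearMap.zero_apply]

theorem exists_eq_zero_of_coercive {E : Type*} [NormedAddCommGroup E]
    [NormedSpace ℝ E] [FiniteDimensional ℝ E] {N : E → Module.Dual ℝ E}
    (hN : ∀ y, Continuous fun x ↦ N x y) {α D : ℝ} (hα : 0 < α)
    (hcoer : ∀ x, α * ‖x‖ ^ 2 - D * ‖x‖ ≤ N x x) : ∃ x, N x = 0 := by
  refine exists_eq_zero_of_eventually_apply_self_pos hN ?_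
  filter_upwards [tendsto_norm_cocompact_atTop.eventually_gt_atTop (max 0 (D / α))] with x hx
  obtain ⟨hx0, hxD⟩ := max_lt_iff.1 hx
  rw [div_lt_iff₀' hα] at hxD
  calc 0 < (α * ‖x‖ - D) * ‖x‖ := mul_pos (sub_pos.2 hxD) hx0
    _ = α * ‖x‖ ^ 2 - D * ‖x‖ := by ring
    _ ≤ N x x := hcoer x

theorem mem_range_flip_of_forall_mem_ker {K X Y : Type*} [Field K] [AddCommGroup X] [Module K X]
    [FiniteDimensional K X] [AddCommGroup Y] [Module K Y] {b : X →ₗ[K] Y →ₗ[K] K}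
    {l : Module.Dual K X} (hl : ∀ x ∈ LinearMap.ker b, l x = 0) : ∃ p, b.flip p = l := by
  rwa [← LinearMap.mem_range, ← Subspace.dualCoannihilator_dualAnnihilator_eq (W := b.flip.range),
    LinearMap.dualCoannihilator_range_eq_ker_flip, LinearMap.flip_flip,
    Submodule.mem_dualAnnihilator]

theorem separatingRight_of_infSup {X Y : Type*} [NormedAddCommGroup X] [Module ℝ X]
    [NormedAddCommGroup Y] [Module ℝ Y] {b : X →ₗ[ℝ] Y →ₗ[ℝ] ℝ} {β : ℝ} (hβ : 0 < β)
    (hinfsup : ∀ q, β * ‖q‖ ≤ sSup {r : ℝ | ∃ v, v ≠ 0 ∧ r = b v q / ‖v‖}) :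
    b.SeparatingRight := fun q hq ↦ by
  have : β * ‖q‖ ≤ 0 := (hinfsup q).trans <| Real.sSup_nonpos fun r ⟨v, _, hr⟩ ↦ by
    rw [hr, hq v, zero_div]
  exact norm_le_zero_iff.1 (nonpos_of_mul_nonpos_right this hβ)

theorem sSup_div_norm_eq_opNorm {X : Type*} [NormedAddCommGroup X] [NormedSpace ℝ X]
    (f : X →L[ℝ] ℝ) : sSup {r : ℝ | ∃ v, v ≠ 0 ∧ r = f v / ‖v‖} = ‖f‖ := by
  have le_opNorm : ∀ r ∈ {r : ℝ | ∃ v, v ≠ 0 ∧ r = f v / ‖v‖}, r ≤ ‖f‖ := by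
    rintro r ⟨v, -, rfl⟩
    exact (div_le_div_of_nonneg_right (le_abs_self _) (norm_nonneg v)).trans (f.ratio_le_opNorm v)
  have apply_div_le {v : X} (hv : v ≠ 0) :
      f v / ‖v‖ ≤ sSup {r : ℝ | ∃ v, v ≠ 0 ∧ r = f v / ‖v‖} := le_csSup ⟨_, le_opNorm⟩ ⟨v, hv, rfl⟩
  have abs_apply_div_le {v : X} (hv : v ≠ 0) :
      |f v| / ‖v‖ ≤ sSup {r : ℝ | ∃ v, v ≠ 0 ∧ r = f v / ‖v‖} := by
    rcases abs_choice (f v) with h | h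
    · rw [h]
      exact apply_div_le hv
    · rw [h, ← map_neg, ← norm_neg v]
      exact apply_div_le (neg_ne_zero.2 hv)
  refine le_antisymm (Real.sSup_le le_opNorm (norm_nonneg f)) ?_
  refine f.opNorm_le_bound' ?_ fun v hv ↦ ?_
  · rcases subsingleton_or_nontrivial X with _ | _
    · exact Real.sSup_nonneg fun r ⟨v, hv, _⟩ ↦ absurd (Subsingleton.elim v 0) hv
    · obtain ⟨v, hv⟩ := exists_ne (0 : X)
      exact (by positivity : 0 ≤ |f v| / ‖v‖).trans (abs_apply_div_le hv)
  · exact (div_le_iff₀ (by positivity)).1 (abs_apply_div_le (norm_ne_zero_iff.1 hv))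

theorem sSup_div_norm_ker_eq_opNorm_domRestrict {X Y : Type*} [NormedAddCommGroup X]
    [NormedSpace ℝ X] [AddCommGroup Y] [Module ℝ Y] (f : X →L[ℝ] ℝ) (b : X →ₗ[ℝ] Y →ₗ[ℝ] ℝ) :
    sSup {r : ℝ | ∃ v, (∀ q, b v q = 0) ∧ v ≠ 0 ∧ r = f v / ‖v‖} =
      ‖f.domRestrict (LinearMap.ker b)‖ := by
  rw [← sSup_div_norm_eq_opNorm]
  congr 1
  ext r
  simp [LinearMap.ext_iff, and_left_comm]

theorem continuous_bilinear_apply {X Y A : Type*} [NormedAddCommGroup X] [NormedSpace ℝ X]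
    [FiniteDimensional ℝ X] [NormedAddCommGroup Y] [NormedSpace ℝ Y] [FiniteDimensional ℝ Y]
    [TopologicalSpace A] (B : X →ₗ[ℝ] Y →ₗ[ℝ] ℝ) {f : A → X} {g : A → Y} (hf : Continuous f)
    (hg : Continuous g) : Continuous fun a ↦ B (f a) (g a) :=
  (B.toContinuousBilinearMap.continuous.comp hf).clm_apply hg

theorem min_mul_norm_sq_le_fst_add_snd {X Y : Type*} [SeminormedAddCommGroup X]
    [SeminormedAddCommGroup Y] {a b : ℝ} (ha : 0 ≤ a) (hb : 0 ≤ b) (x : X × Y) :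
    min a b * ‖x‖ ^ 2 ≤ a * ‖x.1‖ ^ 2 + b * ‖x.2‖ ^ 2 := by
  rcases max_choice ‖x.1‖ ‖x.2‖ with h | h <;> rw [Prod.norm_def, h]
  · exact le_add_of_le_of_nonneg (by gcongr; exact min_le_left a b) (by positivity)
  · exact le_add_of_nonneg_of_le (by positivity) (by gcongr; exact min_le_right a b)

theorem mul_mul_le_half_mul_sq_add {p : ℝ} (hp : 0 < p) (γ t u : ℝ) :
    γ * t * u ≤ p / 2 * u ^ 2 + γ ^ 2 / (2 * p) * t ^ 2 := by
  have : p / 2 * u ^ 2 + γ ^ 2 / (2 * p) * t ^ 2 - γ * t * u = (p * u - γ * t) ^ 2 / (2 * p) := by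
    field_simp
    ring
  exact sub_nonneg.1 (this ▸ by positivity)

theorem le_mul_of_inv_mul_sq_le {k x y : ℝ} (hk : 0 < k) (hx : 0 ≤ x) (hy : 0 ≤ y)
    (h : k⁻¹ * x ^ 2 ≤ y * x) : x ≤ k * y := by
  rcases hx.eq_or_lt with rfl | hx
  · positivity
  · rw [← inv_mul_le_iff₀ hk]
    exact le_of_mul_le_mul_right (by linarith) hx

theorem le_add_of_sq_add_sq_le {x y a d : ℝ} (ha : 0 ≤ a) (hd : 0 ≤ d)
    (h : x ^ 2 + y ^ 2 ≤ a * x + d * y) : x ≤ a + d ∧ y ≤ a + d := by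
  rcases le_total x y with hxy | hyx
  · have hy' : y ≤ a + d := by
      by_contra! hlt
      nlinarith [mul_le_mul_of_nonneg_left hxy ha, sq_nonneg x]
    exact ⟨hxy.trans hy', hy'⟩
  · have hx' : x ≤ a + d := by
      by_contra! hlt
      nlinarith [mul_le_mul_of_nonneg_left hyx hd, sq_nonneg y]
    exact ⟨hx', hyx.trans hx'⟩

theorem eq_zero_of_sq_add_sq_le {x y θ η : ℝ} (hθ : 0 ≤ θ) (hη : 0 ≤ η)
    (hsmall : 3 / 2 * θ + η < 1)
    (h : x ^ 2 + y ^ 2 ≤ θ * (x ^ 2 + x * y + y ^ 2) + η * x ^ 2) : x = 0 ∧ y = 0 := by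
  have hxy : x ^ 2 + y ^ 2 ≤ (3 / 2 * θ + η) * (x ^ 2 + y ^ 2) := by
    linarith [mul_nonneg hθ (sq_nonneg (x - y)), mul_nonneg hη (sq_nonneg y)]
  have hzero : x ^ 2 + y ^ 2 = 0 := by nlinarith [sq_nonneg x, sq_nonneg y]
  exact ⟨by nlinarith [sq_nonneg y], by nlinarith [sq_nonneg x]⟩

theorem eq_zero_of_inv_sq_mul_sq_add_le {a b ζ x y θ η : ℝ} (ha : 0 < a) (hb : 0 < b)
    (haζ : a ≤ ζ) (hbζ : b ≤ ζ) (hx : 0 ≤ x) (hy : 0 ≤ y) (hθ : 0 ≤ θ) (hη : 0 ≤ η)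
    (hsmall : 3 / 2 * (θ * ζ ^ 2) + η * a ^ 2 < 1)
    (h : a⁻¹ ^ 2 * x ^ 2 + b⁻¹ ^ 2 * y ^ 2 ≤ θ * (x ^ 2 + x * y + y ^ 2) + η * x ^ 2) :
    x = 0 ∧ y = 0 := by
  obtain ⟨X, rfl⟩ : ∃ X, a * X = x := ⟨_, mul_div_cancel₀ x ha.ne'⟩
  obtain ⟨Y, rfl⟩ : ∃ Y, b * Y = y := ⟨_, mul_div_cancel₀ y hb.ne'⟩
  have hX : 0 ≤ X := nonneg_of_mul_nonneg_right hx ha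
  have hY : 0 ≤ Y := nonneg_of_mul_nonneg_right hy hb
  have hζ : 0 ≤ ζ := ha.le.trans haζ
  have rescaled : X ^ 2 + Y ^ 2 ≤ θ * ζ ^ 2 * (X ^ 2 + X * Y + Y ^ 2) + η * a ^ 2 * X ^ 2 := by
    calc X ^ 2 + Y ^ 2 = a⁻¹ ^ 2 * (a * X) ^ 2 + b⁻¹ ^ 2 * (b * Y) ^ 2 := by field_simp
      _ ≤ θ * ((a * X) ^ 2 + a * X * (b * Y) + (b * Y) ^ 2) + η * (a * X) ^ 2 := h
      _ ≤ θ * ((ζ * X) ^ 2 + ζ * X * (ζ * Y) + (ζ * Y) ^ 2) + η * (a * X) ^ 2 := by gcongr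
      _ = θ * ζ ^ 2 * (X ^ 2 + X * Y + Y ^ 2) + η * a ^ 2 * X ^ 2 := by ring
  obtain ⟨rfl, rfl⟩ := eq_zero_of_sq_add_sq_le (by positivity) (by positivity) hsmall rescaled
  exact ⟨mul_zero a, mul_zero b⟩

/-- The forms and loads of the full HDG system on a velocity space `𝒱`, a magnetic-field space `𝒲`
and a temperature space `Z`. The pressure forms `b₁`, `b₂` are kept separate: they enter the
analysis only through their kernels and through the recovery of the two pressures. -/
structure HDGForms (𝒱 𝒲 Z : Type*) [NormedAddCommGroup 𝒱] [NormedSpace ℝ 𝒱]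
    [NormedAddCommGroup 𝒲] [NormedSpace ℝ 𝒲] [NormedAddCommGroup Z] [NormedSpace ℝ Z] where
  aV : 𝒱 →ₗ[ℝ] 𝒱 →ₗ[ℝ] ℝ
  aW : 𝒲 →ₗ[ℝ] 𝒲 →ₗ[ℝ] ℝ
  aZ : Z →ₗ[ℝ] Z →ₗ[ℝ] ℝ
  c₁ : 𝒱 →ₗ[ℝ] 𝒱 →ₗ[ℝ] 𝒱 →ₗ[ℝ] ℝ
  c₂ : 𝒱 →ₗ[ℝ] 𝒲 →ₗ[ℝ] 𝒲 →ₗ[ℝ] ℝ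
  c₃ : 𝒱 →ₗ[ℝ] Z →ₗ[ℝ] Z →ₗ[ℝ] ℝ
  G : Z →ₗ[ℝ] 𝒱 →ₗ[ℝ] ℝ
  f₁ : 𝒱 →L[ℝ] ℝ
  f₂ : 𝒲 →L[ℝ] ℝ
  f₃ : Z →L[ℝ] ℝ

namespace HDGForms

variable {𝒱 𝒲 Z Q R : Type*} [NormedAddCommGroup 𝒱] [NormedSpace ℝ 𝒱]
  [NormedAddCommGroup 𝒲] [NormedSpace ℝ 𝒲] [NormedAddCommGroup Z] [NormedSpace ℝ Z]
  [AddCommGroup Q] [Module ℝ Q] [AddCommGroup R] [Module ℝ R]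

/-- `u`, `B`, `T`, `P`, `S` in `x = (u, B, T, P, S)` are the velocity, the magnetic field, the
temperature, the pressure and the magnetic pseudo-pressure solving the full HDG system. -/
def IsFullSolution (D : HDGForms 𝒱 𝒲 Z) (b₁ : 𝒱 →ₗ[ℝ] Q →ₗ[ℝ] ℝ) (b₂ : 𝒲 →ₗ[ℝ] R →ₗ[ℝ] ℝ)
    (x : 𝒱 × 𝒲 × Z × Q × R) : Prop :=
  (∀ v w, D.aV x.1 v + D.aW x.2.1 w + b₁ v x.2.2.2.1 + b₂ w x.2.2.2.2
      + D.c₁ x.1 x.1 v + D.c₂ v x.2.1 x.2.1 - D.c₂ x.1 x.2.1 w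
    = D.f₁ v + D.f₂ w - D.G x.2.2.1 v) ∧
  (∀ q, b₁ x.1 q = 0) ∧ (∀ θ, b₂ x.2.1 θ = 0) ∧
  ∀ z, D.aZ x.2.2.1 z + D.c₃ x.1 x.2.2.1 z = D.f₃ z

/-- The pressure-free part of the momentum equation, as a functional of the velocity test
function. -/
def momentumResidual (D : HDGForms 𝒱 𝒲 Z) (u : 𝒱) (B : 𝒲) (T : Z) : Module.Dual ℝ 𝒱 :=
  D.aV u + D.c₁ u u + (D.c₂.flip B).flip B + D.G T - D.f₁

/-- The part of the induction equation without the magnetic pseudo-pressure, as a functional of the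
magnetic test function. -/
def inductionResidual (D : HDGForms 𝒱 𝒲 Z) (u : 𝒱) (B : 𝒲) : Module.Dual ℝ 𝒲 :=
  D.aW B - D.c₂ u B - D.f₂

/-- The heat equation as a functional of the temperature test function. -/
def heatResidual (D : HDGForms 𝒱 𝒲 Z) (u : 𝒱) (T : Z) : Module.Dual ℝ Z :=
  D.aZ T + D.c₃ u T - D.f₃

/-- A solution of the reduced system, in which trial and test functions are constrained to subspaces
`V` and `W` (in the application the kernels of `b₁` and `b₂`), so that the pressures disappear. -/
structure IsReducedSolution (D : HDGForms 𝒱 𝒲 Z) (V : Submodule ℝ 𝒱) (W : Submodule ℝ 𝒲) (u : 𝒱)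
    (B : 𝒲) (T : Z) : Prop where
  velocity_mem : u ∈ V
  magnetic_mem : B ∈ W
  momentum : ∀ v ∈ V, D.momentumResidual u B T v = 0
  induction : ∀ w ∈ W, D.inductionResidual u B w = 0
  heat : D.heatResidual u T = 0

/-- Coercivity of the diffusion forms, skew-symmetry of the velocity and temperature convection
forms, and the bound on the buoyancy form `G`. The constant `κ` stands for `Pr * Re`. -/
structure IsCoercive (D : HDGForms 𝒱 𝒲 Z) (Ha Rm κ γ : ℝ) : Prop where
  velocity : ∀ v, Ha⁻¹ ^ 2 * ‖v‖ ^ 2 ≤ D.aV v v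
  magnetic : ∀ w, Rm⁻¹ ^ 2 * ‖w‖ ^ 2 ≤ D.aW w w
  temperature : ∀ z, κ⁻¹ * ‖z‖ ^ 2 ≤ D.aZ z z
  c₁_self : ∀ φ v, D.c₁ φ v v = 0
  c₃_self : ∀ u z, D.c₃ u z z = 0
  buoyancy : ∀ T v, |D.G T v| ≤ γ * ‖T‖ * ‖v‖

/-- Boundedness of the three convection forms with the common constant `M`. -/
structure IsBounded (D : HDGForms 𝒱 𝒲 Z) (M : ℝ) : Prop where
  c₁_le : ∀ φ u v, |D.c₁ φ u v| ≤ M * ‖φ‖ * ‖u‖ * ‖v‖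
  c₂_le : ∀ v B w, |D.c₂ v B w| ≤ M * ‖v‖ * ‖B‖ * ‖w‖
  c₃_le : ∀ u T z, |D.c₃ u T z| ≤ M * ‖u‖ * ‖T‖ * ‖z‖

variable {D : HDGForms 𝒱 𝒲 Z} {b₁ : 𝒱 →ₗ[ℝ] Q →ₗ[ℝ] ℝ} {b₂ : 𝒲 →ₗ[ℝ] R →ₗ[ℝ] ℝ}
  {V : Submodule ℝ 𝒱} {W : Submodule ℝ 𝒲}

theorem isBounded_max {M₁ M₂ M₃ : ℝ} (hc₁ : ∀ φ u v, |D.c₁ φ u v| ≤ M₁ * ‖φ‖ * ‖u‖ * ‖v‖)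
    (hc₂ : ∀ v B w, |D.c₂ v B w| ≤ M₂ * ‖v‖ * ‖B‖ * ‖w‖)
    (hc₃ : ∀ u T z, |D.c₃ u T z| ≤ M₃ * ‖u‖ * ‖T‖ * ‖z‖) :
    D.IsBounded (max (max M₁ M₂) M₃) where
  c₁_le φ u v := (hc₁ φ u v).trans (by gcongr; exact (le_max_left _ _).trans (le_max_left _ _))
  c₂_le v B w := (hc₂ v B w).trans (by gcongr; exact (le_max_right _ _).trans (le_max_left _ _))
  c₃_le u T z := (hc₃ u T z).trans (by gcongr; exact le_max_right _ _)

theorem momentumResidual_apply (u v : 𝒱) (B : 𝒲) (T : Z) :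
    D.momentumResidual u B T v
      = D.aV u v + D.c₁ u u v + D.c₂ v B B + D.G T v - D.f₁ v := rfl

theorem inductionResidual_apply (u : 𝒱) (B w : 𝒲) :
    D.inductionResidual u B w = D.aW B w - D.c₂ u B w - D.f₂ w := rfl

theorem heatResidual_apply (u : 𝒱) (T z : Z) :
    D.heatResidual u T z = D.aZ T z + D.c₃ u T z - D.f₃ z := rfl

theorem isFullSolution_iff {u : 𝒱} {B : 𝒲} {T : Z} {P : Q} {S : R} :
    D.IsFullSolution b₁ b₂ (u, B, T, P, S) ↔
      (u ∈ LinearMap.ker b₁ ∧ B ∈ LinearMap.ker b₂) ∧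
      (b₁.flip P = -D.momentumResidual u B T ∧ b₂.flip S = -D.inductionResidual u B) ∧
      D.heatResidual u T = 0 := by
  simp only [IsFullSolution, LinearMap.mem_ker, LinearMap.ext_iff, LinearMap.flip_apply,
    LinearMap.neg_apply, LinearMap.zero_apply, momentumResidual_apply, inductionResidual_apply,
    heatResidual_apply, sub_eq_zero]
  constructor
  · rintro ⟨hmain, hu, hB, hheat⟩
    refine ⟨⟨hu, hB⟩, ⟨fun v ↦ ?_, fun w ↦ ?_⟩, hheat⟩
    · have := hmain v 0
      simp only [map_zero, LinearMap.zero_apply, add_zero, sub_zero] at this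
      linarith
    · have := hmain 0 w
      simp only [map_zero, LinearMap.zero_apply, add_zero, sub_zero, zero_add] at this
      linarith
  · rintro ⟨⟨hu, hB⟩, ⟨hmomentum, hinduction⟩, hheat⟩
    exact ⟨fun v w ↦ by linarith [hmomentum v, hinduction w], hu, hB, hheat⟩

theorem IsFullSolution.isReducedSolution {u : 𝒱} {B : 𝒲} {T : Z} {P : Q} {S : R}
    (h : D.IsFullSolution b₁ b₂ (u, B, T, P, S)) :
    D.IsReducedSolution (LinearMap.ker b₁) (LinearMap.ker b₂) u B T := by
  obtain ⟨⟨hu, hB⟩, ⟨hP, hS⟩, hheat⟩ := isFullSolution_iff.1 h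
  refine ⟨hu, hB, fun v hv ↦ ?_, fun w hw ↦ ?_, hheat⟩
  · rw [← neg_eq_zero, ← LinearMap.neg_apply, ← hP, LinearMap.flip_apply,
      LinearMap.mem_ker.1 hv, LinearMap.zero_apply]
  · rw [← neg_eq_zero, ← LinearMap.neg_apply, ← hS, LinearMap.flip_apply,
      LinearMap.mem_ker.1 hw, LinearMap.zero_apply]

theorem IsReducedSolution.exists_isFullSolution [FiniteDimensional ℝ 𝒱] [FiniteDimensional ℝ 𝒲]
    {u : 𝒱} {B : 𝒲} {T : Z}
    (h : D.IsReducedSolution (LinearMap.ker b₁) (LinearMap.ker b₂) u B T) :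
    ∃ P S, D.IsFullSolution b₁ b₂ (u, B, T, P, S) := by
  obtain ⟨P, hP⟩ := mem_range_flip_of_forall_mem_ker (l := -D.momentumResidual u B T)
    fun v hv ↦ neg_eq_zero.2 (h.momentum v hv)
  obtain ⟨S, hS⟩ := mem_range_flip_of_forall_mem_ker (l := -D.inductionResidual u B)
    fun w hw ↦ neg_eq_zero.2 (h.induction w hw)
  exact ⟨P, S, isFullSolution_iff.2 ⟨⟨h.velocity_mem, h.magnetic_mem⟩, ⟨hP, hS⟩, h.heat⟩⟩

theorem IsCoercive.energy_le {Ha Rm κ γ : ℝ} (hD : D.IsCoercive Ha Rm κ γ) (u : 𝒱) (B : 𝒲)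
    (T : Z) :
    Ha⁻¹ ^ 2 * ‖u‖ ^ 2 + Rm⁻¹ ^ 2 * ‖B‖ ^ 2 - γ * ‖T‖ * ‖u‖ - D.f₁ u - D.f₂ B
      ≤ D.momentumResidual u B T u + D.inductionResidual u B B := by
  rw [momentumResidual_apply, inductionResidual_apply, hD.c₁_self]
  linarith [hD.velocity u, hD.magnetic B, neg_le_of_abs_le (hD.buoyancy T u)]

theorem IsCoercive.heat_energy_le {Ha Rm κ γ : ℝ} (hD : D.IsCoercive Ha Rm κ γ) (u : 𝒱) (T : Z) :
    κ⁻¹ * ‖T‖ ^ 2 - D.f₃ T ≤ D.heatResidual u T T := by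
  rw [heatResidual_apply, hD.c₃_self]
  linarith [hD.temperature T]

section Existence

/-- The reduced system as a nonlinear operator from `V × W × Z` to its dual. The heat equation
carries a weight `l`, chosen later so that the buoyancy term can be absorbed. -/
def reducedOperator (D : HDGForms 𝒱 𝒲 Z) (V : Submodule ℝ 𝒱) (W : Submodule ℝ 𝒲) (l : ℝ)
    (x : V × W × Z) : Module.Dual ℝ (V × W × Z) :=
  (D.momentumResidual x.1 x.2.1 x.2.2 ∘ₗ V.subtype).coprod
    ((D.inductionResidual x.1 x.2.1 ∘ₗ W.subtype).coprod (l • D.heatResidual x.1 x.2.2))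

theorem reducedOperator_apply (l : ℝ) (x y : V × W × Z) :
    D.reducedOperator V W l x y = D.momentumResidual x.1 x.2.1 x.2.2 y.1
      + (D.inductionResidual x.1 x.2.1 y.2.1 + l * D.heatResidual x.1 x.2.2 y.2.2) := rfl

theorem isReducedSolution_of_reducedOperator_eq_zero {l : ℝ} (hl : l ≠ 0) {x : V × W × Z}
    (hx : D.reducedOperator V W l x = 0) : D.IsReducedSolution V W x.1 x.2.1 x.2.2 := by
  have apply_eq_zero (y : V × W × Z) : D.momentumResidual x.1 x.2.1 x.2.2 y.1
      + (D.inductionResidual x.1 x.2.1 y.2.1 + l * D.heatResidual x.1 x.2.2 y.2.2) = 0 := by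
    rw [← reducedOperator_apply, hx, LinearMap.zero_apply]
  refine ⟨x.1.2, x.2.1.2, fun v hv ↦ ?_, fun w hw ↦ ?_, LinearMap.ext fun z ↦ ?_⟩
  · simpa using apply_eq_zero (⟨v, hv⟩, 0, 0)
  · simpa using apply_eq_zero (0, ⟨w, hw⟩, 0)
  · simpa [hl] using apply_eq_zero (0, 0, z)

theorem continuous_reducedOperator_apply [FiniteDimensional ℝ 𝒱] [FiniteDimensional ℝ 𝒲]
    [FiniteDimensional ℝ Z] (l : ℝ) (y : V × W × Z) :
    Continuous fun x ↦ D.reducedOperator V W l x y := by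
  have hu : Continuous fun x : V × W × Z ↦ (x.1 : 𝒱) := by fun_prop
  have hB : Continuous fun x : V × W × Z ↦ (x.2.1 : 𝒲) := by fun_prop
  have hT : Continuous fun x : V × W × Z ↦ x.2.2 := by fun_prop
  have haV := continuous_bilinear_apply D.aV hu (continuous_const (y := (y.1 : 𝒱)))
  have haW := continuous_bilinear_apply D.aW hB (continuous_const (y := (y.2.1 : 𝒲)))
  have haZ := continuous_bilinear_apply D.aZ hT (continuous_const (y := y.2.2))
  have hG := continuous_bilinear_apply D.G hT (continuous_const (y := (y.1 : 𝒱)))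
  have hc₁ := continuous_bilinear_apply (D.c₁.compr₂ (LinearMap.applyₗ (y.1 : 𝒱))) hu hu
  have hc₂ := continuous_bilinear_apply (D.c₂ y.1) hB hB
  have hc₂' := continuous_bilinear_apply (D.c₂.compr₂ (LinearMap.applyₗ (y.2.1 : 𝒲))) hu hB
  have hc₃ := continuous_bilinear_apply (D.c₃.compr₂ (LinearMap.applyₗ y.2.2)) hu hT
  exact ((((haV.add hc₁).add hc₂).add hG).sub continuous_const).add
    (((haW.sub hc₂').sub continuous_const).add
      (((haZ.add hc₃).sub continuous_const).const_mul l))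

theorem IsCoercive.exists_reducedOperator_coercive {Ha Rm κ γ : ℝ} (hHa : 0 < Ha) (hRm : 0 < Rm)
    (hκ : 0 < κ) (hD : D.IsCoercive Ha Rm κ γ) (V : Submodule ℝ 𝒱) (W : Submodule ℝ 𝒲) :
    ∃ l > 0, ∃ α > 0, ∃ C, ∀ x : V × W × Z,
      α * ‖x‖ ^ 2 - C * ‖x‖ ≤ D.reducedOperator V W l x x := by
  let p := Ha⁻¹ ^ 2
  let q := Rm⁻¹ ^ 2
  let σ := γ ^ 2 / (2 * p)
  let l := κ * (σ + 1)
  have hp : 0 < p := by positivity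
  have hq : 0 < q := by positivity
  have hl : 0 < l := by positivity
  refine ⟨l, hl, min (p / 2) (min q 1), by positivity, ‖D.f₁‖ + ‖D.f₂‖ + l * ‖D.f₃‖,
    fun x ↦ ?_⟩
  obtain ⟨u, B, T⟩ := x
  set X := ‖(u, B, T)‖
  have hBT : ‖(B, T)‖ ≤ X := le_max_right _ _
  have hf₁ : D.f₁ u ≤ ‖D.f₁‖ * X := (le_abs_self _).trans (D.f₁.le_opNorm_of_le (le_max_left _ _))
  have hf₂ : D.f₂ B ≤ ‖D.f₂‖ * X := (le_abs_self _).trans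
    (D.f₂.le_opNorm_of_le ((le_max_left _ _).trans hBT))
  have hf₃ : l * D.f₃ T ≤ l * (‖D.f₃‖ * X) := by
    gcongr
    exact (le_abs_self _).trans (D.f₃.le_opNorm_of_le ((le_max_right _ _).trans hBT))
  have quadratic : min (p / 2) (min q 1) * X ^ 2 ≤ p / 2 * ‖u‖ ^ 2 + (q * ‖B‖ ^ 2 + 1 * ‖T‖ ^ 2) :=
    (min_mul_norm_sq_le_fst_add_snd (by positivity) (by positivity) _).trans
      (by gcongr; exact min_mul_norm_sq_le_fst_add_snd hq.le zero_le_one (B, T))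
  have weighted_heat : (σ + 1) * ‖T‖ ^ 2 - l * D.f₃ T ≤ l * D.heatResidual u T T := by
    calc (σ + 1) * ‖T‖ ^ 2 - l * D.f₃ T = l * (κ⁻¹ * ‖T‖ ^ 2 - D.f₃ T) := by
          simp only [l]; field_simp
      _ ≤ l * D.heatResidual u T T := by gcongr; exact hD.heat_energy_le u T
  have energy := hD.energy_le (u : 𝒱) (B : 𝒲) T
  simp only [Submodule.norm_coe] at energy
  rw [reducedOperator_apply]
  linarith [mul_mul_le_half_mul_sq_add hp γ ‖T‖ ‖u‖]

theorem IsCoercive.exists_isReducedSolution [FiniteDimensional ℝ 𝒱] [FiniteDimensional ℝ 𝒲]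
    [FiniteDimensional ℝ Z] {Ha Rm κ γ : ℝ} (hHa : 0 < Ha) (hRm : 0 < Rm) (hκ : 0 < κ)
    (hD : D.IsCoercive Ha Rm κ γ) (V : Submodule ℝ 𝒱) (W : Submodule ℝ 𝒲) :
    ∃ u B T, D.IsReducedSolution V W u B T := by
  obtain ⟨l, hl, α, hα, C, hcoer⟩ := hD.exists_reducedOperator_coercive hHa hRm hκ V W
  obtain ⟨x, hx⟩ := exists_eq_zero_of_coercive (continuous_reducedOperator_apply l) hα hcoer
  exact ⟨_, _, _, isReducedSolution_of_reducedOperator_eq_zero hl.ne' hx⟩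

theorem IsCoercive.exists_isFullSolution [FiniteDimensional ℝ 𝒱] [FiniteDimensional ℝ 𝒲]
    [FiniteDimensional ℝ Z] {Ha Rm κ γ : ℝ} (hHa : 0 < Ha) (hRm : 0 < Rm) (hκ : 0 < κ)
    (hD : D.IsCoercive Ha Rm κ γ) (b₁ : 𝒱 →ₗ[ℝ] Q →ₗ[ℝ] ℝ) (b₂ : 𝒲 →ₗ[ℝ] R →ₗ[ℝ] ℝ) :
    ∃ x, D.IsFullSolution b₁ b₂ x := by
  obtain ⟨u, B, T, h⟩ := hD.exists_isReducedSolution hHa hRm hκ (LinearMap.ker b₁)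
    (LinearMap.ker b₂)
  obtain ⟨P, S, hPS⟩ := h.exists_isFullSolution
  exact ⟨(u, B, T, P, S), hPS⟩

end Existence

section Uniqueness

variable {Ha Rm κ γ M ζ : ℝ} {u u₁ u₂ : 𝒱} {B B₁ B₂ : 𝒲} {T T₁ T₂ : Z}

theorem IsReducedSolution.norm_temperature_le (h : D.IsReducedSolution V W u B T)
    (hD : D.IsCoercive Ha Rm κ γ) (hκ : 0 < κ) : ‖T‖ ≤ κ * ‖D.f₃‖ := by
  refine le_mul_of_inv_mul_sq_le hκ (norm_nonneg T) (norm_nonneg _) ?_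
  have energy := hD.heat_energy_le u T
  rw [h.heat, LinearMap.zero_apply] at energy
  linarith [(le_abs_self _).trans (D.f₃.le_opNorm T)]

theorem IsReducedSolution.energy_le (h : D.IsReducedSolution V W u B T)
    (hD : D.IsCoercive Ha Rm κ γ) (hκ : 0 < κ) (hγ : 0 ≤ γ) :
    Ha⁻¹ ^ 2 * ‖u‖ ^ 2 + Rm⁻¹ ^ 2 * ‖B‖ ^ 2
      ≤ (‖D.f₁.domRestrict V‖ + κ * γ * ‖D.f₃‖) * ‖u‖ + ‖D.f₂.domRestrict W‖ * ‖B‖ := by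
  have hf₁ : D.f₁ u ≤ ‖D.f₁.domRestrict V‖ * ‖u‖ :=
    (le_abs_self _).trans ((D.f₁.domRestrict V).le_opNorm ⟨u, h.velocity_mem⟩)
  have hf₂ : D.f₂ B ≤ ‖D.f₂.domRestrict W‖ * ‖B‖ :=
    (le_abs_self _).trans ((D.f₂.domRestrict W).le_opNorm ⟨B, h.magnetic_mem⟩)
  have buoyancy : γ * ‖T‖ * ‖u‖ ≤ γ * (κ * ‖D.f₃‖) * ‖u‖ := by
    gcongr
    exact h.norm_temperature_le hD hκ
  have energy := hD.energy_le u B T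
  rw [h.momentum u h.velocity_mem, h.induction B h.magnetic_mem] at energy
  linarith

theorem IsReducedSolution.norm_velocity_le_and_norm_magnetic_le
    (h : D.IsReducedSolution V W u B T) (hD : D.IsCoercive Ha Rm κ γ) (hHa : 0 < Ha)
    (hRm : 0 < Rm) (hκ : 0 < κ) (hγ : 0 ≤ γ) (hHaζ : Ha ≤ ζ) (hRmζ : Rm ≤ ζ)
    (hγζ : Ha * κ * γ ≤ ζ) :
    ‖u‖ ≤ ζ ^ 2 * (‖D.f₁.domRestrict V‖ + ‖D.f₂.domRestrict W‖ + ‖D.f₃‖) ∧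
      ‖B‖ ≤ ζ ^ 2 * (‖D.f₁.domRestrict V‖ + ‖D.f₂.domRestrict W‖ + ‖D.f₃‖) := by
  set n₁ := ‖D.f₁.domRestrict V‖
  set n₂ := ‖D.f₂.domRestrict W‖
  set n₃ := ‖D.f₃‖
  have hζ : 0 ≤ ζ := hHa.le.trans hHaζ
  have scaled_energy : (Ha⁻¹ * ‖u‖) ^ 2 + (Rm⁻¹ * ‖B‖) ^ 2
      ≤ ζ * (n₁ + n₃) * (Ha⁻¹ * ‖u‖) + ζ * n₂ * (Rm⁻¹ * ‖B‖) := by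
    calc (Ha⁻¹ * ‖u‖) ^ 2 + (Rm⁻¹ * ‖B‖) ^ 2 = Ha⁻¹ ^ 2 * ‖u‖ ^ 2 + Rm⁻¹ ^ 2 * ‖B‖ ^ 2 := by ring
      _ ≤ (n₁ + κ * γ * n₃) * ‖u‖ + n₂ * ‖B‖ := h.energy_le hD hκ hγ
      _ = (Ha * n₁ + Ha * κ * γ * n₃) * (Ha⁻¹ * ‖u‖) + Rm * n₂ * (Rm⁻¹ * ‖B‖) := by field_simp
      _ ≤ (ζ * n₁ + ζ * n₃) * (Ha⁻¹ * ‖u‖) + ζ * n₂ * (Rm⁻¹ * ‖B‖) := by gcongr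
      _ = ζ * (n₁ + n₃) * (Ha⁻¹ * ‖u‖) + ζ * n₂ * (Rm⁻¹ * ‖B‖) := by ring
  have unscale {a y : ℝ} (ha : 0 < a) (haζ : a ≤ ζ) (hy : a⁻¹ * y ≤ ζ * (n₁ + n₃) + ζ * n₂) :
      y ≤ ζ ^ 2 * (n₁ + n₂ + n₃) := by
    calc y ≤ a * (ζ * (n₁ + n₃) + ζ * n₂) := (inv_mul_le_iff₀ ha).1 hy
      _ ≤ ζ * (ζ * (n₁ + n₃) + ζ * n₂) := by gcongr
      _ = ζ ^ 2 * (n₁ + n₂ + n₃) := by ring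
  obtain ⟨hu, hB⟩ := le_add_of_sq_add_sq_le (by positivity) (by positivity) scaled_energy
  exact ⟨unscale hHa hHaζ hu, unscale hRm hRmζ hB⟩

theorem IsReducedSolution.norm_temperature_sub_le (h₁ : D.IsReducedSolution V W u₁ B₁ T₁)
    (h₂ : D.IsReducedSolution V W u₂ B₂ T₂) (hD : D.IsCoercive Ha Rm κ γ) (hM : D.IsBounded M)
    (hM0 : 0 ≤ M) (hκ : 0 < κ) : ‖T₁ - T₂‖ ≤ κ ^ 2 * M * ‖D.f₃‖ * ‖u₁ - u₂‖ := by
  have heat_sub : D.aZ (T₁ - T₂) (T₁ - T₂) + D.c₃ (u₁ - u₂) T₂ (T₁ - T₂) = 0 := by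
    have heat₁ := heatResidual_apply (D := D) u₁ T₁ (T₁ - T₂)
    have heat₂ := heatResidual_apply (D := D) u₂ T₂ (T₁ - T₂)
    have skew : D.c₃ u₁ T₁ (T₁ - T₂) - D.c₃ u₁ T₂ (T₁ - T₂) = 0 := by
      rw [← LinearMap.sub_apply, ← map_sub, hD.c₃_self]
    rw [h₁.heat, LinearMap.zero_apply] at heat₁
    rw [h₂.heat, LinearMap.zero_apply] at heat₂
    rw [map_sub D.aZ, map_sub D.c₃, LinearMap.sub_apply, LinearMap.sub_apply, LinearMap.sub_apply]
    linarith
  have energy : κ⁻¹ * ‖T₁ - T₂‖ ^ 2 ≤ M * ‖u₁ - u₂‖ * ‖T₂‖ * ‖T₁ - T₂‖ := by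
    linarith [hD.temperature (T₁ - T₂), neg_le_of_abs_le (hM.c₃_le (u₁ - u₂) T₂ (T₁ - T₂))]
  calc ‖T₁ - T₂‖ ≤ κ * (M * ‖u₁ - u₂‖ * ‖T₂‖) :=
        le_mul_of_inv_mul_sq_le hκ (norm_nonneg _) (by positivity) energy
    _ ≤ κ * (M * ‖u₁ - u₂‖ * (κ * ‖D.f₃‖)) := by
        gcongr
        exact h₂.norm_temperature_le hD hκ
    _ = κ ^ 2 * M * ‖D.f₃‖ * ‖u₁ - u₂‖ := by ring

theorem IsReducedSolution.energy_sub_eq (h₁ : D.IsReducedSolution V W u₁ B₁ T₁)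
    (h₂ : D.IsReducedSolution V W u₂ B₂ T₂) (hc₁ : ∀ φ v, D.c₁ φ v v = 0) :
    D.aV (u₁ - u₂) (u₁ - u₂) + D.aW (B₁ - B₂) (B₁ - B₂)
      = D.c₂ u₁ (B₁ - B₂) (B₁ - B₂) - D.c₁ (u₁ - u₂) u₂ (u₁ - u₂)
        - D.c₂ (u₁ - u₂) (B₁ - B₂) B₁ - D.G (T₁ - T₂) (u₁ - u₂) := by
  have hu := V.sub_mem h₁.velocity_mem h₂.velocity_mem
  have hB := W.sub_mem h₁.magnetic_mem h₂.magnetic_mem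
  have momentum₁ := h₁.momentum _ hu
  have momentum₂ := h₂.momentum _ hu
  have induction₁ := h₁.induction _ hB
  have induction₂ := h₂.induction _ hB
  have skew := hc₁ u₁ (u₁ - u₂)
  simp only [momentumResidual_apply, inductionResidual_apply, map_sub, LinearMap.sub_apply]
    at momentum₁ momentum₂ induction₁ induction₂ skew ⊢
  linarith

theorem IsReducedSolution.energy_sub_le (h₁ : D.IsReducedSolution V W u₁ B₁ T₁)
    (h₂ : D.IsReducedSolution V W u₂ B₂ T₂) (hD : D.IsCoercive Ha Rm κ γ) (hM : D.IsBounded M)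
    (hM0 : 0 ≤ M) (hκ : 0 < κ) (hγ : 0 ≤ γ) {K : ℝ} (hu₁ : ‖u₁‖ ≤ K) (hu₂ : ‖u₂‖ ≤ K)
    (hB₁ : ‖B₁‖ ≤ K) :
    Ha⁻¹ ^ 2 * ‖u₁ - u₂‖ ^ 2 + Rm⁻¹ ^ 2 * ‖B₁ - B₂‖ ^ 2
      ≤ M * K * (‖u₁ - u₂‖ ^ 2 + ‖u₁ - u₂‖ * ‖B₁ - B₂‖ + ‖B₁ - B₂‖ ^ 2)
        + γ * κ ^ 2 * M * ‖D.f₃‖ * ‖u₁ - u₂‖ ^ 2 := by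
  have energy := h₁.energy_sub_eq h₂ hD.c₁_self
  have htemp := h₁.norm_temperature_sub_le h₂ hD hM hM0 hκ
  set δu := u₁ - u₂
  set δB := B₁ - B₂
  have hG : -D.G (T₁ - T₂) δu ≤ γ * (κ ^ 2 * M * ‖D.f₃‖ * ‖δu‖) * ‖δu‖ :=
    (neg_le_abs _).trans ((hD.buoyancy _ _).trans (by gcongr))
  have hc₁ : -D.c₁ δu u₂ δu ≤ M * ‖δu‖ * K * ‖δu‖ :=
    (neg_le_abs _).trans ((hM.c₁_le _ _ _).trans (by gcongr))
  have hc₂ : -D.c₂ δu δB B₁ ≤ M * ‖δu‖ * ‖δB‖ * K :=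
    (neg_le_abs _).trans ((hM.c₂_le _ _ _).trans (by gcongr))
  have hc₂' : D.c₂ u₁ δB δB ≤ M * K * ‖δB‖ * ‖δB‖ :=
    (le_abs_self _).trans ((hM.c₂_le _ _ _).trans (by gcongr))
  linarith [hD.velocity δu, hD.magnetic δB]

theorem IsReducedSolution.eq_of_small (h₁ : D.IsReducedSolution V W u₁ B₁ T₁)
    (h₂ : D.IsReducedSolution V W u₂ B₂ T₂) (hD : D.IsCoercive Ha Rm κ γ) (hM : D.IsBounded M)
    (hHa : 0 < Ha) (hRm : 0 < Rm) (hκ : 0 < κ) (hγ : 0 ≤ γ) (hM0 : 0 ≤ M) (hHaζ : Ha ≤ ζ)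
    (hRmζ : Rm ≤ ζ) (hγζ : Ha * κ * γ ≤ ζ)
    (hsmall : M * (3 / 2 * ζ ^ 4 * (‖D.f₁.domRestrict V‖ + ‖D.f₂.domRestrict W‖ + ‖D.f₃‖)
      + ζ ^ 2 * κ * ‖D.f₃‖) < 1) :
    u₁ = u₂ ∧ B₁ = B₂ ∧ T₁ = T₂ := by
  obtain ⟨hu₁, hB₁⟩ := h₁.norm_velocity_le_and_norm_magnetic_le hD hHa hRm hκ hγ hHaζ hRmζ hγζ
  obtain ⟨hu₂, -⟩ := h₂.norm_velocity_le_and_norm_magnetic_le hD hHa hRm hκ hγ hHaζ hRmζ hγζ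
  have energy := h₁.energy_sub_le h₂ hD hM hM0 hκ hγ hu₁ hu₂ hB₁
  have htemp := h₁.norm_temperature_sub_le h₂ hD hM hM0 hκ
  set F := ‖D.f₁.domRestrict V‖ + ‖D.f₂.domRestrict W‖ + ‖D.f₃‖
  have hF : 0 ≤ F := by positivity
  have hζ : 0 < ζ := hHa.trans_le hHaζ
  have buoyancy : γ * κ ^ 2 * M * ‖D.f₃‖ * Ha ^ 2 ≤ M * (ζ ^ 2 * κ * ‖D.f₃‖) := by
    calc γ * κ ^ 2 * M * ‖D.f₃‖ * Ha ^ 2 = M * (Ha * (Ha * κ * γ) * κ * ‖D.f₃‖) := by ring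
      _ ≤ M * (ζ * ζ * κ * ‖D.f₃‖) := by gcongr
      _ = M * (ζ ^ 2 * κ * ‖D.f₃‖) := by ring
  obtain ⟨hx, hy⟩ := eq_zero_of_inv_sq_mul_sq_add_le hHa hRm hHaζ hRmζ (norm_nonneg _)
    (norm_nonneg _) (by positivity) (by positivity) (by linarith) energy
  rw [hx, mul_zero] at htemp
  exact ⟨norm_sub_eq_zero_iff.1 hx, norm_sub_eq_zero_iff.1 hy,
    norm_sub_eq_zero_iff.1 (le_antisymm htemp (norm_nonneg _))⟩

theorem IsFullSolution.eq_of_small {x y : 𝒱 × 𝒲 × Z × Q × R} (hx : D.IsFullSolution b₁ b₂ x)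
    (hy : D.IsFullSolution b₁ b₂ y) (hb₁ : b₁.SeparatingRight) (hb₂ : b₂.SeparatingRight)
    (hD : D.IsCoercive Ha Rm κ γ) (hM : D.IsBounded M) (hHa : 0 < Ha) (hRm : 0 < Rm)
    (hκ : 0 < κ) (hγ : 0 ≤ γ) (hM0 : 0 ≤ M) (hHaζ : Ha ≤ ζ) (hRmζ : Rm ≤ ζ)
    (hγζ : Ha * κ * γ ≤ ζ)
    (hsmall : M * (3 / 2 * ζ ^ 4 * (‖D.f₁.domRestrict (LinearMap.ker b₁)‖
      + ‖D.f₂.domRestrict (LinearMap.ker b₂)‖ + ‖D.f₃‖) + ζ ^ 2 * κ * ‖D.f₃‖) < 1) :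
    x = y := by
  obtain ⟨u₁, B₁, T₁, P₁, S₁⟩ := x
  obtain ⟨u₂, B₂, T₂, P₂, S₂⟩ := y
  obtain ⟨rfl, rfl, rfl⟩ := hx.isReducedSolution.eq_of_small hy.isReducedSolution hD hM hHa hRm hκ
    hγ hM0 hHaζ hRmζ hγζ hsmall
  obtain ⟨-, ⟨hP₁, hS₁⟩, -⟩ := isFullSolution_iff.1 hx
  obtain ⟨-, ⟨hP₂, hS₂⟩, -⟩ := isFullSolution_iff.1 hy
  rw [LinearMap.separatingRight_iff_flip_ker_eq_bot, LinearMap.ker_eq_bot] at hb₁ hb₂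
  obtain rfl : P₁ = P₂ := hb₁ (hP₁.trans hP₂.symm)
  obtain rfl : S₁ = S₂ := hb₂ (hS₁.trans hS₂.symm)
  rfl

end Uniqueness

end HDGForms

theorem full_HDG_existence_and_uniqueness_general {𝒱 𝒲 Z Q R : Type*}
    [NormedAddCommGroup 𝒱] [NormedSpace ℝ 𝒱] [FiniteDimensional ℝ 𝒱]
    [NormedAddCommGroup 𝒲] [NormedSpace ℝ 𝒲] [FiniteDimensional ℝ 𝒲]
    [NormedAddCommGroup Z] [NormedSpace ℝ Z] [FiniteDimensional ℝ Z]
    [AddCommGroup Q] [Module ℝ Q] [AddCommGroup R] [Module ℝ R]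
    {Ha Rm κ γ ζ M : ℝ} (hHa : 0 < Ha) (hRm : 0 < Rm) (hκ : 0 < κ) (hγ : 0 ≤ γ)
    (hHaζ : Ha ≤ ζ) (hRmζ : Rm ≤ ζ) (hγζ : Ha * κ * γ ≤ ζ) (hM0 : 0 ≤ M)
    {b₁ : 𝒱 →ₗ[ℝ] Q →ₗ[ℝ] ℝ} {b₂ : 𝒲 →ₗ[ℝ] R →ₗ[ℝ] ℝ} (hb₁ : b₁.SeparatingRight)
    (hb₂ : b₂.SeparatingRight) {D : HDGForms 𝒱 𝒲 Z} (hD : D.IsCoercive Ha Rm κ γ)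
    (hM : D.IsBounded M) :
    (∃ x, D.IsFullSolution b₁ b₂ x) ∧
      (M * (3 / 2 * ζ ^ 4 * (‖D.f₁.domRestrict (LinearMap.ker b₁)‖
          + ‖D.f₂.domRestrict (LinearMap.ker b₂)‖ + ‖D.f₃‖) + ζ ^ 2 * κ * ‖D.f₃‖) < 1 →
        ∃! x, D.IsFullSolution b₁ b₂ x) := by
  have existence := hD.exists_isFullSolution hHa hRm hκ b₁ b₂
  refine ⟨existence, fun hsmall ↦ existsUnique_of_exists_of_unique existence fun x y hx hy ↦ ?_⟩
  exact hx.eq_of_small hy hb₁ hb₂ hD hM hHa hRm hκ hγ hM0 hHaζ hRmζ hγζ hsmall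

/-- Abstract finite-dimensional version of Theorem 4.1: the full HDG system
admits at least one solution, and under the smallness condition (with the dual
norms of `f₁`, `f₂`, `f₃` taken over the kernels of `b₁`, `b₂` and over `Z`)
the solution is unique. -/
theorem full_HDG_existence_and_uniqueness
    {𝒱 𝒲 Z Q R : Type*}
    [NormedAddCommGroup 𝒱] [InnerProductSpace ℝ 𝒱] [FiniteDimensional ℝ 𝒱]
    [NormedAddCommGroup 𝒲] [InnerProductSpace ℝ 𝒲] [FiniteDimensional ℝ 𝒲]
    [NormedAddCommGroup Z] [InnerProductSpace ℝ Z] [FiniteDimensional ℝ Z]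
    [NormedAddCommGroup Q] [NormedSpace ℝ Q] [FiniteDimensional ℝ Q]
    [NormedAddCommGroup R] [NormedSpace ℝ R] [FiniteDimensional ℝ R]
    (Ha Rm Pr Re γ ζ : ℝ)
    (hHa : 0 < Ha) (hRm : 0 < Rm) (hPr : 0 < Pr) (hRe : 0 < Re) (hγ : 0 < γ)
    (hζ : ζ = max (max Ha Rm) (Ha * Pr * Re * γ))
    (b₁ : 𝒱 →ₗ[ℝ] Q →ₗ[ℝ] ℝ) (b₂ : 𝒲 →ₗ[ℝ] R →ₗ[ℝ] ℝ)
    (β₁ β₂ : ℝ) (hβ₁ : 0 < β₁) (hβ₂ : 0 < β₂)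
    (hinfsup₁ : ∀ q : Q,
      β₁ * ‖q‖ ≤ sSup {r : ℝ | ∃ v : 𝒱, v ≠ 0 ∧ r = b₁ v q / ‖v‖})
    (hinfsup₂ : ∀ θ : R,
      β₂ * ‖θ‖ ≤ sSup {r : ℝ | ∃ w : 𝒲, w ≠ 0 ∧ r = b₂ w θ / ‖w‖})
    (aV : 𝒱 →ₗ[ℝ] 𝒱 →ₗ[ℝ] ℝ) (aW : 𝒲 →ₗ[ℝ] 𝒲 →ₗ[ℝ] ℝ) (aZ : Z →ₗ[ℝ] Z →ₗ[ℝ] ℝ)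
    (haV_symm : ∀ v₁ v₂ : 𝒱, aV v₁ v₂ = aV v₂ v₁)
    (haW_symm : ∀ w₁ w₂ : 𝒲, aW w₁ w₂ = aW w₂ w₁)
    (haZ_symm : ∀ z₁ z₂ : Z, aZ z₁ z₂ = aZ z₂ z₁)
    (haV_coer : ∀ v : 𝒱, Ha⁻¹ ^ 2 * ‖v‖ ^ 2 ≤ aV v v)
    (haW_coer : ∀ w : 𝒲, Rm⁻¹ ^ 2 * ‖w‖ ^ 2 ≤ aW w w)
    (haZ_coer : ∀ z : Z, (Pr * Re)⁻¹ * ‖z‖ ^ 2 ≤ aZ z z)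
    (M₁ M₂ M₃ : ℝ) (hM₁ : 0 ≤ M₁) (hM₂ : 0 ≤ M₂) (hM₃ : 0 ≤ M₃)
    (c₁ : 𝒱 →ₗ[ℝ] 𝒱 →ₗ[ℝ] 𝒱 →ₗ[ℝ] ℝ)
    (c₂ : 𝒱 →ₗ[ℝ] 𝒲 →ₗ[ℝ] 𝒲 →ₗ[ℝ] ℝ)
    (c₃ : 𝒱 →ₗ[ℝ] Z →ₗ[ℝ] Z →ₗ[ℝ] ℝ)
    (hc₁_bound : ∀ (φ u v : 𝒱), |c₁ φ u v| ≤ M₁ * ‖φ‖ * ‖u‖ * ‖v‖)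
    (hc₂_bound : ∀ (v : 𝒱) (B w : 𝒲), |c₂ v B w| ≤ M₂ * ‖v‖ * ‖B‖ * ‖w‖)
    (hc₃_bound : ∀ (u : 𝒱) (T z : Z), |c₃ u T z| ≤ M₃ * ‖u‖ * ‖T‖ * ‖z‖)
    (hc₁_skew : ∀ (φ v : 𝒱), c₁ φ v v = 0)
    (hc₃_skew : ∀ (u : 𝒱) (z : Z), c₃ u z z = 0)
    (G : Z →ₗ[ℝ] 𝒱 →ₗ[ℝ] ℝ)
    (hG_bound : ∀ (T : Z) (v : 𝒱), |G T v| ≤ γ * ‖T‖ * ‖v‖)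
    (f₁ : 𝒱 →L[ℝ] ℝ) (f₂ : 𝒲 →L[ℝ] ℝ) (f₃ : Z →L[ℝ] ℝ)
    (nf₁ nf₂ nf₃ : ℝ)
    (hnf₁ : nf₁ = sSup {r : ℝ |
      ∃ v : 𝒱, (∀ q : Q, b₁ v q = 0) ∧ v ≠ 0 ∧ r = f₁ v / ‖v‖})
    (hnf₂ : nf₂ = sSup {r : ℝ |
      ∃ w : 𝒲, (∀ θ : R, b₂ w θ = 0) ∧ w ≠ 0 ∧ r = f₂ w / ‖w‖})
    (hnf₃ : nf₃ = sSup {r : ℝ | ∃ z : Z, z ≠ 0 ∧ r = f₃ z / ‖z‖}) :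
    (∃ ubtpr : 𝒱 × 𝒲 × Z × Q × R,
      (∀ (v : 𝒱) (w : 𝒲),
        aV ubtpr.1 v + aW ubtpr.2.1 w + b₁ v ubtpr.2.2.2.1 + b₂ w ubtpr.2.2.2.2
            + c₁ ubtpr.1 ubtpr.1 v + c₂ v ubtpr.2.1 ubtpr.2.1
            - c₂ ubtpr.1 ubtpr.2.1 w
          = f₁ v + f₂ w - G ubtpr.2.2.1 v) ∧
      (∀ q : Q, b₁ ubtpr.1 q = 0) ∧
      (∀ θ : R, b₂ ubtpr.2.1 θ = 0) ∧
      (∀ z : Z, aZ ubtpr.2.2.1 z + c₃ ubtpr.1 ubtpr.2.2.1 z = f₃ z)) ∧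
    (max (max M₁ M₂) M₃
        * (12 * ζ ^ 4 * (nf₁ + nf₂ + nf₃) + 2 * ζ ^ 2 * Pr * Re * nf₃) < 1 →
      ∃! ubtpr : 𝒱 × 𝒲 × Z × Q × R,
        (∀ (v : 𝒱) (w : 𝒲),
          aV ubtpr.1 v + aW ubtpr.2.1 w + b₁ v ubtpr.2.2.2.1
              + b₂ w ubtpr.2.2.2.2
              + c₁ ubtpr.1 ubtpr.1 v + c₂ v ubtpr.2.1 ubtpr.2.1
              - c₂ ubtpr.1 ubtpr.2.1 w
            = f₁ v + f₂ w - G ubtpr.2.2.1 v) ∧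
        (∀ q : Q, b₁ ubtpr.1 q = 0) ∧
        (∀ θ : R, b₂ ubtpr.2.1 θ = 0) ∧
        (∀ z : Z, aZ ubtpr.2.2.1 z + c₃ ubtpr.1 ubtpr.2.2.1 z = f₃ z)) := by
  let D : HDGForms 𝒱 𝒲 Z := ⟨aV, aW, aZ, c₁, c₂, c₃, G, f₁, f₂, f₃⟩
  let M := max (max M₁ M₂) M₃
  have hD : D.IsCoercive Ha Rm (Pr * Re) γ :=
    ⟨haV_coer, haW_coer, haZ_coer, hc₁_skew, hc₃_skew, hG_bound⟩
  have hM : D.IsBounded M := HDGForms.isBounded_max hc₁_bound hc₂_bound hc₃_bound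
  have hM0 : 0 ≤ M := le_max_of_le_right hM₃
  obtain ⟨⟨hHaζ, hRmζ⟩, hγζ⟩ : (Ha ≤ ζ ∧ Rm ≤ ζ) ∧ Ha * (Pr * Re) * γ ≤ ζ := by
    rw [← max_le_iff, ← max_le_iff, hζ, ← mul_assoc Ha]
  rw [sSup_div_norm_ker_eq_opNorm_domRestrict] at hnf₁ hnf₂
  rw [sSup_div_norm_eq_opNorm] at hnf₃
  obtain ⟨existence, uniqueness⟩ := full_HDG_existence_and_uniqueness_general hHa hRm
    (mul_pos hPr hRe) hγ.le hHaζ hRmζ hγζ hM0 (separatingRight_of_infSup hβ₁ hinfsup₁)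
    (separatingRight_of_infSup hβ₂ hinfsup₂) hD hM
  refine ⟨existence, fun hsmall ↦ uniqueness (hsmall.trans_le' ?_)⟩
  rw [hnf₁, hnf₂, hnf₃, mul_assoc _ Pr, mul_assoc 2, mul_assoc 2]
  refine mul_le_mul_of_nonneg_left (add_le_add ?_ ?_) hM0
  · gcongr
    norm_num
  · exact le_mul_of_one_le_left (by positivity) one_le_two
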